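/- Let k ∈ ℕ and let λ_1, …, λ_k be positive real numbers that are linearly independent over ℤ (no nontrivial integer linear combination of them equals zero). Then lim_{n→∞} χ(ℝ^n_∞, B(λ_1,…,λ_k))^{1/n} = (k+1)/k; that is, χ(ℝ^n_∞, B(λ_1,…,λ_k)) = ((k+1)/k + o(1))^n. -/

import Mathlib

open Set Filter

/-- The set `A` (in the metric space `β`) contains an isometric copy of the
metric (sub)space `M` (a subset of the metric space `α`). -/
def HasCopy {α β : Type*} [MetricSpace α] [MetricSpace β] (M : Set α) (A : Set β) : Prop :=
  ∃ f : α → β, (∀ x ∈ M, ∀ y ∈ M, dist (f x) (f y) = dist x y) ∧ f '' M ⊆ A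

/-- The chromatic number of `ℝ^n` with the max-norm metric and forbidden subspace `M`. -/
noncomputable def chrom {α : Type*} [MetricSpace α] (M : Set α) (n : ℕ) : ℕ :=
  sInf {N : ℕ | ∃ c : (Fin n → ℝ) → Fin N, ∀ i : Fin N, ¬ HasCopy M {x | c x = i}}

/-- The baton `B(λ₁,…,λ_k)`: the set of partial sums `σ₀,…,σ_k` of `λ₁,…,λ_k`. -/
noncomputable def baton (lam : ℕ → ℝ) (k : ℕ) : Set ℝ :=
  (fun r => ∑ j ∈ Finset.range r, lam j) '' Set.Iic k

/-!
Lower bound: fix `p : Fin (k + 1) → ℝ` enumerating the baton increasingly and let `S` be a subset of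
the grid without copies. Send a word `w ∈ S` to the word obtained by lowering by one every letter
`w i` such that `w` is not the end of a copy, inside `S`, of the initial segment of the baton up to
`p (w i)` lying along the `i`-th axis. This map never uses the top letter. It is injective: if `i`
is a coordinate in which two words are furthest apart and their codes agree there, then their
letters at `i` are consecutive, and the lower word extends to a partial copy ending at the upper
one. So `S` has at most `k ^ n` of the `(k + 1) ^ n` grid points.

Upper bound: colour `ℝ` by `ψ : ℝ → ZMod (k + 1)` with `ψ (x + λⱼ) = ψ x + 1`, so that translates of
the baton and of its mirror image see every residue. A copy in `ℝ^n` is such a translate in some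
coordinate, so no word `v : Fin n → ZMod (k + 1)` differs in every coordinate from `ψ ∘ x` at all
points `x` of the copy. A union bound gives `O(n ((k + 1) / k) ^ n)` words `v` such that each word
differs everywhere from one of them, and that `v` colours the point.
-/

theorem exists_dist_apply_eq_dist {ι : Type*} [Fintype ι] {X : ι → Type*} [∀ i, MetricSpace (X i)]
    {u v : ∀ i, X i} (h : u ≠ v) : ∃ i, dist (u i) (v i) = dist u v := by
  obtain ⟨j, -⟩ := Function.ne_iff.mp h
  have : Nonempty ι := ⟨j⟩
  obtain ⟨i, hi⟩ := Finite.exists_max fun i => dist (u i) (v i)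
  exact ⟨i, le_antisymm (dist_le_pi_dist u v i) ((dist_pi_le_iff dist_nonneg).2 hi)⟩

theorem HasCopy.mono {α β : Type*} [MetricSpace α] [MetricSpace β] {M : Set α} {A B : Set β}
    (h : HasCopy M A) (hAB : A ⊆ B) : HasCopy M B :=
  let ⟨f, hf, hfA⟩ := h
  ⟨f, hf, hfA.trans hAB⟩

theorem hasCopy_range {α β κ : Type*} [MetricSpace α] [MetricSpace β] [Nonempty β]
    {p : κ → α} {g : κ → β} {A : Set β} (hg : ∀ a b, dist (g a) (g b) = dist (p a) (p b))
    (hA : ∀ a, g a ∈ A) : HasCopy (range p) A := by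
  have hfac : g.FactorsThrough p := fun a b hab => by
    rw [← dist_eq_zero, hg, hab, dist_self]
  refine ⟨Function.extend p g fun _ => Classical.arbitrary β, ?_, ?_⟩
  · rintro _ ⟨a, rfl⟩ _ ⟨b, rfl⟩
    rw [hfac.extend_apply, hfac.extend_apply, hg]
  · rintro _ ⟨_, ⟨a, rfl⟩, rfl⟩
    rw [hfac.extend_apply]
    exact hA a

section LowerBound

variable {ι κ : Type*} [LinearOrder κ] [Fintype ι] {p : κ → ℝ} {S : Set (ι → κ)} {i : ι}
  {u v w : ι → κ}

/-- The points of the grid `(range p) ^ ι` are encoded by words `w : ι → κ`, the point of `w` being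
`p ∘ w`. The word `w` ends a partial copy if `S` contains, in the grid, an isometric copy of the
initial segment `p '' Iic (w i)` on which the `i`-th coordinate is the identity, with last
point `w`. Only `≤` is required of the distances, as coordinate `i` gives `≥`. -/
def EndsPartialCopy (p : κ → ℝ) (S : Set (ι → κ)) (i : ι) (w : ι → κ) : Prop :=
  ∃ x : κ → ι → κ, x (w i) = w ∧ (∀ a ≤ w i, x a ∈ S ∧ x a i = a) ∧
    ∀ a ≤ w i, ∀ b ≤ w i, dist (p ∘ x a) (p ∘ x b) ≤ dist (p a) (p b)

theorem endsPartialCopy_of_isMin (hw : w ∈ S) (hmin : IsMin (w i)) :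
    EndsPartialCopy p S i w :=
  ⟨fun _ => w, rfl, fun _ ha => ⟨hw, (hmin.eq_of_le ha).symm⟩, fun _ _ _ _ => by simp⟩

theorem EndsPartialCopy.extend (hu : EndsPartialCopy p S i u) (hp : Monotone p) (hv : v ∈ S)
    (hcov : u i ⋖ v i) (hdist : dist (p ∘ u) (p ∘ v) ≤ dist (p (u i)) (p (v i))) :
    EndsPartialCopy p S i v := by
  obtain ⟨x, hxu, hxS, hx⟩ := hu
  have hle : ∀ {a}, a ≤ v i → a ≠ v i → a ≤ u i := fun ha hne =>
    hcov.wcovBy.le_of_lt (ha.lt_of_ne hne)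
  have hnew : ∀ a ≤ u i, dist (p ∘ x a) (p ∘ v) ≤ dist (p a) (p (v i)) := fun a ha =>
    calc dist (p ∘ x a) (p ∘ v) ≤ dist (p ∘ x a) (p ∘ u) + dist (p ∘ u) (p ∘ v) :=
          dist_triangle ..
      _ ≤ dist (p a) (p (u i)) + dist (p (u i)) (p (v i)) := by
          gcongr
          simpa only [hxu] using hx a ha (u i) le_rfl
      _ = dist (p a) (p (v i)) :=
          dist_add_dist_of_mem_segment <| by
            rw [segment_eq_Icc (hp (ha.trans hcov.le))]
            exact ⟨hp ha, hp hcov.le⟩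
  refine ⟨Function.update x (v i) v, Function.update_self .., fun a ha => ?_, fun a ha b hb => ?_⟩
  · rcases eq_or_ne a (v i) with rfl | hne
    · simpa using hv
    · simpa [hne] using hxS a (hle ha hne)
  · rcases eq_or_ne a (v i) with rfl | hane <;> rcases eq_or_ne b (v i) with rfl | hbne
    · simp
    · simpa [hbne, dist_comm] using hnew b (hle hb hbne)
    · simpa [hane] using hnew a (hle ha hane)
    · simpa [hane, hbne] using hx a (hle ha hane) b (hle hb hbne)

theorem EndsPartialCopy.hasCopy (h : EndsPartialCopy p S i w) (hmax : IsMax (w i)) :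
    HasCopy (range p) ((p ∘ ·) '' S) := by
  obtain ⟨x, -, hxS, hx⟩ := h
  have hle : ∀ a, a ≤ w i := fun a => hmax.isTop a
  refine hasCopy_range (g := fun a => p ∘ x a) (fun a b => ?_) fun a =>
    mem_image_of_mem _ (hxS a (hle a)).1
  refine le_antisymm (hx a (hle a) b (hle b)) ?_
  simpa [(hxS _ (hle _)).2] using dist_le_pi_dist (p ∘ x a) (p ∘ x b) i

variable [PredOrder κ]

open scoped Classical in
/-- The coding of words that bounds the size of a set `S` without copies: coordinates in which `w`
does not end a partial copy are lowered by one step, so that the top letter never occurs. -/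
noncomputable def partialCopyCode (p : κ → ℝ) (S : Set (ι → κ)) (w : ι → κ) (i : ι) : κ :=
  if EndsPartialCopy p S i w then w i else Order.pred (w i)

theorem partialCopyCode_le : partialCopyCode p S w i ≤ w i := by
  unfold partialCopyCode
  split_ifs
  exacts [le_rfl, Order.pred_le _]

theorem partialCopyCode_not_isMax (hS : ¬ HasCopy (range p) ((p ∘ ·) '' S)) (hw : w ∈ S) :
    ¬ IsMax (partialCopyCode p S w i) := by
  unfold partialCopyCode
  split_ifs with h
  · exact fun hmax => hS (h.hasCopy hmax)
  · exact (Order.pred_lt_of_not_isMin (mt (endsPartialCopy_of_isMin hw) h)).not_isMax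

theorem partialCopyCode_lt_partialCopyCode (hp : Monotone p) (hu : u ∈ S) (hv : v ∈ S)
    (hlt : u i < v i) (hdist : dist (p ∘ u) (p ∘ v) ≤ dist (p (u i)) (p (v i))) :
    partialCopyCode p S u i < partialCopyCode p S v i := by
  by_cases hv' : EndsPartialCopy p S i v
  · simpa only [partialCopyCode, if_pos hv'] using partialCopyCode_le.trans_lt hlt
  have hle : u i ≤ Order.pred (v i) := Order.le_pred_of_lt hlt
  rw [partialCopyCode, partialCopyCode, if_neg hv']
  split_ifs with hu'
  · refine hle.lt_of_ne fun heq => hv' (hu'.extend hp hv ?_ hdist)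
    exact heq ▸ Order.pred_covBy_of_not_isMin hlt.not_isMin
  · exact (Order.pred_lt_of_not_isMin (mt (endsPartialCopy_of_isMin hu) hu')).trans_le hle

theorem partialCopyCode_injOn (hp : StrictMono p) : InjOn (partialCopyCode p S) S := by
  intro u hu v hv huv
  by_contra hne
  obtain ⟨i, hi⟩ := exists_dist_apply_eq_dist (hp.injective.comp_left.ne hne)
  have hne' : u i ≠ v i := fun h => hne <| hp.injective.comp_left <| dist_eq_zero.1 <| by
    simp [← hi, h]
  rcases hne'.lt_or_gt with hlt | hlt
  · exact (partialCopyCode_lt_partialCopyCode hp.monotone hu hv hlt hi.ge).ne (congrFun huv i)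
  · refine (partialCopyCode_lt_partialCopyCode hp.monotone hv hu hlt ?_).ne (congrFun huv.symm i)
    simpa only [dist_comm, Function.comp_apply] using hi.ge

theorem card_le_pow_of_not_hasCopy [Fintype κ] [OrderTop κ] {S : Finset (ι → κ)} (hp : StrictMono p)
    (hS : ¬ HasCopy (range p) ((p ∘ ·) '' (S : Set (ι → κ)))) :
    S.card ≤ (Fintype.card κ - 1) ^ Fintype.card ι := by
  classical
  calc S.card ≤ (Fintype.piFinset fun _ : ι => ({⊤}ᶜ : Finset κ)).card := by
        refine Finset.card_le_card_of_injOn (partialCopyCode p S) (fun w hw => ?_)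
          (partialCopyCode_injOn hp)
        simpa using fun i h => partialCopyCode_not_isMax hS hw (i := i) (isMax_iff_eq_top.2 h)
    _ = (Fintype.card κ - 1) ^ Fintype.card ι := by
        simp [Fintype.card_piFinset, Finset.card_compl]

end LowerBound

section Colouring

/-- No colour class of `c` contains an isometric copy of `M`; `chrom M n` is the least number of
colours of such a colouring `c` of `ℝ^n`. -/
def IsCopyFree {α β γ : Type*} [MetricSpace α] [MetricSpace β] (M : Set α) (c : β → γ) : Prop :=
  ∀ i, ¬ HasCopy M {x | c x = i}

variable {α : Type*} [MetricSpace α] {M : Set α} {n N : ℕ}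

theorem chrom_le {c : (Fin n → ℝ) → Fin N} (hc : IsCopyFree M c) : chrom M n ≤ N :=
  Nat.sInf_le ⟨c, hc⟩

theorem IsCopyFree.exists_chrom {c : (Fin n → ℝ) → Fin N} (hc : IsCopyFree M c) :
    ∃ c' : (Fin n → ℝ) → Fin (chrom M n), IsCopyFree M c' :=
  Nat.sInf_mem (s := {N | ∃ c : (Fin n → ℝ) → Fin N, IsCopyFree M c}) ⟨N, c, hc⟩

theorem IsCopyFree.card_pow_le {κ ι γ : Type*} [LinearOrder κ] [PredOrder κ] [OrderTop κ]
    [Fintype κ] [Fintype ι] [Fintype γ] {p : κ → ℝ} (hp : StrictMono p) {c : (ι → ℝ) → γ}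
    (hc : IsCopyFree (range p) c) :
    Fintype.card κ ^ Fintype.card ι ≤
      Fintype.card γ * (Fintype.card κ - 1) ^ Fintype.card ι := by
  classical
  calc Fintype.card κ ^ Fintype.card ι = (Finset.univ : Finset (ι → κ)).card := by simp
    _ ≤ (Finset.univ : Finset γ).card * (Fintype.card κ - 1) ^ Fintype.card ι := by
        rw [mul_comm]
        refine Finset.card_le_mul_card_image_of_maps_to (f := fun w => c (p ∘ w))
          (fun _ _ => Finset.mem_univ _) _ fun j _ =>
            card_le_pow_of_not_hasCopy hp fun h => hc j (h.mono ?_)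
        rintro _ ⟨w, hw, rfl⟩
        exact (Finset.mem_filter.1 hw).2

theorem IsCopyFree.ncard_pow_le {M : Set ℝ} {c : (Fin n → ℝ) → Fin N} (hM : M.Finite)
    (hne : M.Nonempty) (hc : IsCopyFree M c) : M.ncard ^ n ≤ N * (M.ncard - 1) ^ n := by
  obtain ⟨k, hk⟩ := Nat.exists_eq_succ_of_ne_zero ((ncard_pos hM).2 hne).ne'
  have hcard : hM.toFinset.card = k + 1 := by rw [← ncard_eq_toFinset_card M hM, hk]
  have hrange : range (hM.toFinset.orderEmbOfFin hcard) = M := by simp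
  have hcard_le := IsCopyFree.card_pow_le (hM.toFinset.orderEmbOfFin hcard).strictMono
    (hrange.symm ▸ hc)
  simpa only [hk, Fintype.card_fin] using hcard_le

end Colouring

theorem exists_mul_one_sub_pow_lt_one {A p : ℝ} (hA : 1 ≤ A) (hp : 0 < p) (hp1 : p ≤ 1) :
    ∃ t : ℕ, t ≤ Real.log A / p + 1 ∧ A * (1 - p) ^ t < 1 := by
  have hlog : 0 ≤ Real.log A / p := div_nonneg (Real.log_nonneg hA) hp.le
  refine ⟨⌊Real.log A / p⌋₊ + 1, by simpa using Nat.floor_le hlog, ?_⟩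
  set t := ⌊Real.log A / p⌋₊ + 1
  have ht : Real.log A < t * p := by
    rw [← div_lt_iff₀ hp]
    exact_mod_cast Nat.lt_floor_add_one _
  calc A * (1 - p) ^ t ≤ A * Real.exp (-p) ^ t := by
        gcongr
        exact Real.one_sub_le_exp_neg p
    _ = Real.exp (Real.log A - t * p) := by
        rw [sub_eq_add_neg, Real.exp_add, Real.exp_log (by positivity), ← Real.exp_nat_mul,
          mul_neg]
    _ < 1 := Real.exp_lt_one_iff.2 (sub_neg.2 ht)

theorem exists_fin_fun_forall_exists_rel {α β : Type*} [Fintype α] [Nonempty α] [Fintype β]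
    [Nonempty β] (r : α → β → Prop) [∀ a, DecidablePred (r a)] {p : ℝ} (hp : 0 < p)
    (h : ∀ a, p * Fintype.card β ≤ (Finset.univ.filter (r a)).card) :
    ∃ t : ℕ, t ≤ Real.log (Fintype.card α) / p + 1 ∧
      ∃ V : Fin t → β, ∀ a, ∃ s, r a (V s) := by
  classical
  have hβ : (0 : ℝ) < Fintype.card β := by exact_mod_cast Fintype.card_pos
  have hp1 : p ≤ 1 := by
    have hle := (h (Classical.arbitrary α)).trans (Nat.cast_le.2 (Finset.card_le_univ _))
    exact (mul_le_iff_le_one_left hβ).1 hle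
  obtain ⟨t, ht, hlt⟩ := exists_mul_one_sub_pow_lt_one
    (Nat.one_le_cast.2 (Fintype.card_pos (α := α))) hp hp1
  refine ⟨t, ht, ?_⟩
  by_contra! hcon
  have hbad : ∀ a, (((Finset.univ.filter (r a))ᶜ.card : ℕ) : ℝ) ≤ (1 - p) * Fintype.card β := by
    intro a
    rw [Finset.card_compl, Nat.cast_sub (Finset.card_le_univ _)]
    linarith [h a]
  have hcover : (Finset.univ : Finset (Fin t → β)) ⊆
      Finset.univ.biUnion fun a => Fintype.piFinset fun _ => (Finset.univ.filter (r a))ᶜ := by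
    intro V _
    simpa using hcon V
  refine hlt.not_ge (le_of_mul_le_mul_right ?_ (pow_pos hβ t))
  calc 1 * (Fintype.card β : ℝ) ^ t = (Finset.univ : Finset (Fin t → β)).card := by simp
    _ ≤ ∑ a : α, ((Finset.univ.filter (r a))ᶜ.card : ℝ) ^ t := by
        refine (Nat.cast_le.2 ((Finset.card_le_card hcover).trans Finset.card_biUnion_le)).trans ?_
        simp [Fintype.card_piFinset]
    _ ≤ ∑ _a : α, ((1 - p) * Fintype.card β) ^ t := by
        gcongr with a
        exact hbad a
    _ = Fintype.card α * (1 - p) ^ t * Fintype.card β ^ t := by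
        rw [Finset.sum_const, Finset.card_univ, nsmul_eq_mul, mul_pow, mul_assoc]

theorem exists_fin_fun_forall_exists_ne {ι γ : Type*} [Fintype ι] [Fintype γ] [Nontrivial γ] :
    ∃ t : ℕ, t ≤ Real.log (Fintype.card γ) * Fintype.card ι *
        ((Fintype.card γ : ℝ) / (Fintype.card γ - 1)) ^ Fintype.card ι + 1 ∧
      ∃ V : Fin t → ι → γ, ∀ w : ι → γ, ∃ s, ∀ i, V s i ≠ w i := by
  classical
  have hγ : (1 : ℝ) < Fintype.card γ := by exact_mod_cast Fintype.one_lt_card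
  have hp : (0 : ℝ) < (((Fintype.card γ : ℝ) - 1) / Fintype.card γ) ^ Fintype.card ι :=
    pow_pos (div_pos (by linarith) (by linarith)) _
  have havoid (w : ι → γ) : (Finset.univ.filter fun v : ι → γ => ∀ i, v i ≠ w i).card =
      (Fintype.card γ - 1) ^ Fintype.card ι := by
    rw [show (Finset.univ.filter fun v : ι → γ => ∀ i, v i ≠ w i) =
      Fintype.piFinset fun i => {w i}ᶜ by ext; simp]
    simp [Fintype.card_piFinset, Finset.card_compl]
  obtain ⟨t, ht, hV⟩ := exists_fin_fun_forall_exists_rel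
    (fun w v : ι → γ => ∀ i, v i ≠ w i) hp fun w => by
      rw [havoid, Fintype.card_fun]
      push_cast [Fintype.card_pos (α := γ)]
      rw [← mul_pow, div_mul_cancel₀ _ (by positivity)]
  refine ⟨t, ht.trans_eq ?_, hV⟩
  rw [Fintype.card_fun, Nat.cast_pow, Real.log_pow, ← inv_div _ (Fintype.card γ : ℝ), inv_pow]
  ring

section Rainbow

/-- Every translate of `M` and of `-M` meets all colour classes of `ψ`. For `M ⊆ ℝ` these translates
are the coordinate projections in which a copy of `M` in `ℝ^n` attains its diameter. -/
def IsRainbow {G γ : Type*} [AddGroup G] (M : Set G) (ψ : G → γ) : Prop :=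
  ∀ x z, (∃ t ∈ M, ψ (x + t) = z) ∧ ∃ t ∈ M, ψ (x - t) = z

theorem IsRainbow.surjOn {G γ : Type*} [AddGroup G] {M : Set G} {ψ : G → γ}
    (hψ : IsRainbow M ψ) : SurjOn ψ M univ := fun z _ => by
  simpa using (hψ 0 z).1

variable {γ : Type*} {M : Set ℝ} {ψ : ℝ → γ}

theorem forall_eq_add_or_forall_eq_sub {h : ℝ → ℝ} {a b : ℝ} (ha : IsLeast M a)
    (hb : IsGreatest M b) (hlip : ∀ x ∈ M, ∀ y ∈ M, dist (h x) (h y) ≤ dist x y)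
    (hab : dist (h a) (h b) = dist a b) :
    ∃ c, (∀ t ∈ M, h t = c + t) ∨ ∀ t ∈ M, h t = c - t := by
  have hbound : ∀ t ∈ M, |h t - h a| ≤ t - a ∧ |h b - h t| ≤ b - t := fun t ht => by
    have h1 := hlip t ht a ha.1
    have h2 := hlip b hb.1 t ht
    rw [Real.dist_eq, Real.dist_eq] at h1 h2
    rw [abs_of_nonneg (sub_nonneg.2 (ha.2 ht))] at h1
    rw [abs_of_nonneg (sub_nonneg.2 (hb.2 ht))] at h2
    exact ⟨h1, h2⟩
  rw [dist_comm, dist_comm a, Real.dist_eq, Real.dist_eq, abs_of_nonneg (sub_nonneg.2 (ha.2 hb.1))]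
    at hab
  rcases eq_or_eq_neg_of_abs_eq hab with hab | hab
  · refine ⟨h a - a, .inl fun t ht => ?_⟩
    obtain ⟨h1, h2⟩ := hbound t ht
    linarith [le_of_abs_le h1, le_of_abs_le h2]
  · refine ⟨h a + a, .inr fun t ht => ?_⟩
    obtain ⟨h1, h2⟩ := hbound t ht
    linarith [neg_le_of_abs_le h1, neg_le_of_abs_le h2]

theorem exists_apply_eq_add_or_sub {ι : Type*} [Fintype ι] {f : ℝ → ι → ℝ} {a b : ℝ}
    (ha : IsLeast M a) (hb : IsGreatest M b) (hab : a ≠ b)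
    (hf : ∀ x ∈ M, ∀ y ∈ M, dist (f x) (f y) = dist x y) :
    ∃ i c, (∀ t ∈ M, f t i = c + t) ∨ ∀ t ∈ M, f t i = c - t := by
  have hfab : dist (f a) (f b) = dist a b := hf a ha.1 b hb.1
  obtain ⟨i, hi⟩ := exists_dist_apply_eq_dist (dist_pos.1 (hfab ▸ dist_pos.2 hab))
  exact ⟨i, forall_eq_add_or_forall_eq_sub (h := fun t => f t i) ha hb
    (fun x hx y hy => (dist_le_pi_dist _ _ i).trans_eq (hf x hx y hy)) (hi.trans hfab)⟩

theorem IsRainbow.isCopyFree {ι δ : Type*} [Fintype ι] (hψ : IsRainbow M ψ) {a b : ℝ}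
    (ha : IsLeast M a) (hb : IsGreatest M b) (hab : a ≠ b) {V : δ → ι → γ} {c : (ι → ℝ) → δ}
    (hc : ∀ x i, V (c x) i ≠ ψ (x i)) : IsCopyFree M c := by
  rintro s ⟨f, hf, hfM⟩
  have hne : ∀ t ∈ M, ∀ i, ψ (f t i) ≠ V s i := fun t ht i => by
    rw [← show c (f t) = s from hfM (mem_image_of_mem f ht)]
    exact (hc (f t) i).symm
  obtain ⟨i, x, hadd | hsub⟩ := exists_apply_eq_add_or_sub ha hb hab hf
  · obtain ⟨t, ht, hψt⟩ := (hψ x (V s i)).1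
    exact hne t ht i (hadd t ht ▸ hψt)
  · obtain ⟨t, ht, hψt⟩ := (hψ x (V s i)).2
    exact hne t ht i (hsub t ht ▸ hψt)

theorem IsRainbow.exists_isCopyFree [Fintype γ] [Nontrivial γ] (hψ : IsRainbow M ψ)
    (hM : IsCompact M) (n : ℕ) :
    ∃ t : ℕ, t ≤ Real.log (Fintype.card γ) * n *
        ((Fintype.card γ : ℝ) / (Fintype.card γ - 1)) ^ n + 1 ∧
      ∃ c : (Fin n → ℝ) → Fin t, IsCopyFree M c := by
  have hMnt : M.Nontrivial := nontrivial_of_image ψ M (nontrivial_univ.mono hψ.surjOn)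
  obtain ⟨a, ha⟩ := hM.exists_isLeast hMnt.nonempty
  obtain ⟨b, hb⟩ := hM.exists_isGreatest hMnt.nonempty
  have hab : a ≠ b := by
    rintro rfl
    exact hMnt.not_subsingleton fun x hx y hy =>
      ((hb.2 hx).antisymm (ha.2 hx)).trans ((ha.2 hy).antisymm (hb.2 hy))
  obtain ⟨t, ht, V, hV⟩ := exists_fin_fun_forall_exists_ne (ι := Fin n) (γ := γ)
  choose c hc using fun x : Fin n → ℝ => hV (ψ ∘ x)
  exact ⟨t, by simpa using ht, c, hψ.isCopyFree ha hb hab hc⟩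

end Rainbow

theorem tendsto_rpow_one_div_of_le_mul_pow {u : ℕ → ℝ} {b C : ℝ} (hb : 0 ≤ b) (hC : 0 < C)
    (hlow : ∀ᶠ n in atTop, b ^ n ≤ u n) (hup : ∀ᶠ n : ℕ in atTop, u n ≤ C * n * b ^ n) :
    Tendsto (fun n : ℕ => u n ^ (1 / (n : ℝ))) atTop (nhds b) := by
  have hroot {n : ℕ} (hn : n ≠ 0) : (b ^ n) ^ (1 / (n : ℝ)) = b := by
    rw [one_div, Real.pow_rpow_inv_natCast hb hn]
  have hC1 : Tendsto (fun n : ℕ => C ^ (1 / (n : ℝ))) atTop (nhds 1) := by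
    simpa [Function.comp_def] using (Real.continuousAt_const_rpow hC.ne').tendsto.comp
      (tendsto_one_div_atTop_nhds_zero_nat (𝕜 := ℝ))
  have hn1 : Tendsto (fun n : ℕ => (n : ℝ) ^ (1 / (n : ℝ))) atTop (nhds 1) :=
    tendsto_rpow_div.comp tendsto_natCast_atTop_atTop
  have hupper : Tendsto (fun n : ℕ => C ^ (1 / (n : ℝ)) * (n : ℝ) ^ (1 / (n : ℝ)) * b) atTop
      (nhds b) := by simpa using (hC1.mul hn1).mul_const b
  refine tendsto_of_tendsto_of_tendsto_of_le_of_le' tendsto_const_nhds hupper ?_ ?_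
  · filter_upwards [hlow, eventually_ne_atTop 0] with n hn hn0
    exact (hroot hn0).symm.le.trans (Real.rpow_le_rpow (by positivity) hn (by positivity))
  · filter_upwards [hlow, hup, eventually_ne_atTop 0] with n hn hn' hn0
    calc u n ^ (1 / (n : ℝ)) ≤ (C * n * b ^ n) ^ (1 / (n : ℝ)) :=
          Real.rpow_le_rpow ((pow_nonneg hb n).trans hn) hn' (by positivity)
      _ = C ^ (1 / (n : ℝ)) * (n : ℝ) ^ (1 / (n : ℝ)) * b := by
          rw [Real.mul_rpow (by positivity) (by positivity), Real.mul_rpow hC.le (by positivity),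
            hroot hn0]

theorem IsRainbow.tendsto_chrom_rpow {γ : Type*} [Fintype γ] [Nontrivial γ] {M : Set ℝ}
    {ψ : ℝ → γ} (hψ : IsRainbow M ψ) (hM : M.ncard = Fintype.card γ) :
    Tendsto (fun n : ℕ => (chrom M n : ℝ) ^ (1 / (n : ℝ))) atTop
      (nhds ((Fintype.card γ : ℝ) / (Fintype.card γ - 1))) := by
  have hq : (1 : ℝ) < Fintype.card γ := by exact_mod_cast Fintype.one_lt_card
  have hlog := Real.log_pos hq
  have hne : M.Nonempty := nonempty_of_ncard_ne_zero (hM ▸ Fintype.card_ne_zero)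
  have hfin : M.Finite := finite_of_ncard_ne_zero (hM ▸ Fintype.card_ne_zero)
  have hb : 1 ≤ (Fintype.card γ : ℝ) / (Fintype.card γ - 1) := by
    rw [one_le_div] <;> linarith
  choose t ht c hc using hψ.exists_isCopyFree hfin.isCompact
  refine tendsto_rpow_one_div_of_le_mul_pow (C := Real.log (Fintype.card γ) + 1)
    (by positivity) (by positivity) (.of_forall fun n => ?_) ?_
  · obtain ⟨c', hc'⟩ := (hc n).exists_chrom
    rw [div_pow, div_le_iff₀ (pow_pos (by linarith) n)]
    rw [← Nat.cast_pred Fintype.card_pos]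
    exact_mod_cast hM ▸ hc'.ncard_pow_le hfin hne
  · filter_upwards [eventually_ge_atTop 1] with n hn
    have hn' : (1 : ℝ) ≤ n := by exact_mod_cast hn
    calc (chrom M n : ℝ) ≤ t n := by exact_mod_cast chrom_le (hc n)
      _ ≤ Real.log (Fintype.card γ) * n * (Fintype.card γ / (Fintype.card γ - 1)) ^ n + 1 := ht n
      _ ≤ (Real.log (Fintype.card γ) + 1) * n * (Fintype.card γ / (Fintype.card γ - 1)) ^ n := by
          linarith [one_le_mul_of_one_le_of_one_le hn' (one_le_pow₀ hb (n := n))]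

theorem exists_forall_apply_add_eq {F G A : Type*} [AddGroup F] [AddCommGroup G]
    [AddGroup A] {L : F →+ G} {S : F →+ A} (hLS : L.ker ≤ S.ker) :
    ∃ ψ : G → A, ∀ x a, ψ (x + L a) = ψ x + S a := by
  let rep (x : G) : G := (QuotientAddGroup.mk x : G ⧸ L.range).out
  have hrep (x : G) : ∃ a, L a = x - rep x := by
    obtain ⟨⟨_, a, rfl⟩, ha⟩ := QuotientAddGroup.mk_out_eq_add L.range x
    exact ⟨-a, by simp only [rep, ha, map_neg]; abel⟩
  have hrep_add (x : G) (a : F) : rep (x + L a) = rep x := by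
    simp only [rep]
    rw [QuotientAddGroup.mk_add_of_mem x (AddMonoidHom.mem_range.2 ⟨a, rfl⟩)]
  choose coeff hcoeff using hrep
  refine ⟨fun x => S (coeff x), fun x a => ?_⟩
  rw [← map_add, ← sub_eq_zero, ← map_sub]
  refine hLS ?_
  rw [AddMonoidHom.mem_ker, map_sub, map_add, hcoeff, hcoeff, hrep_add]
  abel

section Baton

variable {k : ℕ} {lam : ℕ → ℝ}

theorem exists_forall_apply_add_sum_eq (N : ℕ)
    (hrel : ∀ a : ℕ → ℤ, ∑ j ∈ Finset.range k, (a j : ℝ) * lam j = 0 →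
      (N : ℤ) ∣ ∑ j ∈ Finset.range k, a j) :
    ∃ ψ : ℝ → ZMod N, ∀ x, ∀ m ≤ k,
      ψ (x + ∑ j ∈ Finset.range m, lam j) = ψ x + m ∧
      ψ (x - ∑ j ∈ Finset.range m, lam j) = ψ x - m := by
  let L : (ℕ → ℤ) →+ ℝ := .mk' (fun a => ∑ j ∈ Finset.range k, (a j : ℝ) * lam j) fun a b => by
    simp [add_mul, Finset.sum_add_distrib]
  let S : (ℕ → ℤ) →+ ZMod N := .mk' (fun a => ((∑ j ∈ Finset.range k, a j : ℤ) : ZMod N))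
    fun a b => by simp [Finset.sum_add_distrib]
  have hLS : L.ker ≤ S.ker := fun a ha => (ZMod.intCast_zmod_eq_zero_iff_dvd _ _).2 (hrel a ha)
  obtain ⟨ψ, hψ⟩ := exists_forall_apply_add_eq hLS
  let e (m : ℕ) : ℕ → ℤ := fun j => if j < m then 1 else 0
  have hfilter : ∀ m ≤ k, (Finset.range k).filter (· < m) = Finset.range m := by grind
  have hLe : ∀ m ≤ k, L (e m) = ∑ j ∈ Finset.range m, lam j := fun m hm => by
    simp [L, e, ← Finset.sum_filter, hfilter m hm]
  have hSe : ∀ m ≤ k, S (e m) = m := fun m hm => by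
    simp [S, e, hfilter m hm]
  refine ⟨ψ, fun x m hm => ⟨?_, ?_⟩⟩
  · rw [← hLe m hm, hψ, hSe m hm]
  · rw [← hLe m hm, sub_eq_add_neg, ← map_neg, hψ, map_neg, hSe m hm, sub_eq_add_neg]

theorem exists_isRainbow_baton
    (hrel : ∀ a : ℕ → ℤ, ∑ j ∈ Finset.range k, (a j : ℝ) * lam j = 0 →
      ((k + 1 : ℕ) : ℤ) ∣ ∑ j ∈ Finset.range k, a j) :
    ∃ ψ : ℝ → ZMod (k + 1), IsRainbow (baton lam k) ψ := by
  obtain ⟨ψ, hψ⟩ := exists_forall_apply_add_sum_eq (k + 1) hrel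
  have hresidue (z : ZMod (k + 1)) : ∃ m ≤ k, (m : ZMod (k + 1)) = z :=
    ⟨z.val, Nat.lt_succ_iff.1 z.val_lt, ZMod.natCast_zmod_val z⟩
  refine ⟨ψ, fun x z => ⟨?_, ?_⟩⟩
  · obtain ⟨m, hm, hz⟩ := hresidue (z - ψ x)
    exact ⟨_, ⟨m, hm, rfl⟩, by rw [(hψ x m hm).1, hz, add_sub_cancel]⟩
  · obtain ⟨m, hm, hz⟩ := hresidue (ψ x - z)
    exact ⟨_, ⟨m, hm, rfl⟩, by rw [(hψ x m hm).2, hz, sub_sub_cancel]⟩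

theorem IsRainbow.ncard_baton {γ : Type*} [Fintype γ] {ψ : ℝ → γ}
    (hψ : IsRainbow (baton lam k) ψ) (hγ : Fintype.card γ = k + 1) :
    (baton lam k).ncard = k + 1 := by
  have hfin : (baton lam k).Finite := (finite_Iic k).image _
  refine le_antisymm ?_ ?_
  · exact (ncard_image_le (finite_Iic k)).trans_eq (by simp)
  · rw [← hγ, ← Nat.card_eq_fintype_card, ← ncard_univ]
    exact (ncard_le_ncard hψ.surjOn (hfin.image ψ)).trans (ncard_image_le hfin)

end Baton

theorem chi_lin_indep_baton_general (k : ℕ) (hk : 0 < k) (lam : ℕ → ℝ)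
    (hrel : ∀ a : ℕ → ℤ, ∑ j ∈ Finset.range k, (a j : ℝ) * lam j = 0 →
      ((k + 1 : ℕ) : ℤ) ∣ ∑ j ∈ Finset.range k, a j) :
    Tendsto (fun n : ℕ => (chrom (baton lam k) n : ℝ) ^ (1 / (n : ℝ)))
      atTop (nhds (((k : ℝ) + 1) / k)) := by
  have : Nontrivial (ZMod (k + 1)) := ZMod.nontrivial_iff.2 (by omega)
  obtain ⟨ψ, hψ⟩ := exists_isRainbow_baton hrel
  have hcard := ZMod.card (k + 1)
  simpa [hcard] using hψ.tendsto_chrom_rpow ((hψ.ncard_baton hcard).trans hcard.symm)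

/-- If `λ₁,…,λ_k` are positive reals that are linearly independent over `ℤ`, then
`χ(ℝ^n_∞, B(λ₁,…,λ_k))^(1/n) → (k+1)/k` as `n → ∞`. -/
theorem chi_lin_indep_baton (k : ℕ) (hk : 0 < k) (lam : ℕ → ℝ)
    (hpos : ∀ j < k, 0 < lam j)
    (hindep : ∀ a : ℕ → ℤ,
      ∑ j ∈ Finset.range k, (a j : ℝ) * lam j = 0 → ∀ j < k, a j = 0) :
    Tendsto (fun n : ℕ => (chrom (baton lam k) n : ℝ) ^ (1 / (n : ℝ)))
      atTop (nhds (((k : ℝ) + 1) / k)) :=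
  chi_lin_indep_baton_general k hk lam fun a ha =>
    Finset.dvd_sum fun j hj => by simp [hindep a ha j (Finset.mem_range.1 hj)]
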